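/- Let I be a real interval, n ≥ 1, and c₁,…,cₙ : I → ℂ continuous functions such that the monic polynomial p_t(λ) = λⁿ + c₁(t)λ^{n−1} + ⋯ + cₙ(t) has exactly r distinct roots for every t ∈ I. Then there are r continuous functions α₁,…,α_r : I → ℂ such that for every t ∈ I the values α₁(t),…,α_r(t) are the r distinct roots of p_t, and moreover the multiplicity of αᵢ(t) as a root of p_t is constant in t for each i. -/

import Mathlib

open Polynomial Set

/-!
Over the parameter space `T`, the incidence set `{(t, z) | p_t(z) = 0}` projects to `T` by an open
map, because roots depend continuously on coefficients. A point `t₀` has `r` roots with disjoint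
neighbourhoods; by openness each neighbourhood still contains a root of `p_t` for `t` near `t₀`, and
since `p_t` has only `r` roots it contains exactly one. So the projection is a covering map, and
over a simply connected `T` it splits into `r` continuous sections. The multiplicity along a section
is upper semicontinuous, being the order of vanishing of a Taylor expansion with continuous
coefficients, and the multiplicities add up to the constant `n`; hence each is locally constant.
-/

open Topology Function

section Covering

variable {E X ι : Type*}

lemma exists_equiv_fiber_of_pairwise_disjoint [Finite ι] {f : E → X} {x : X} {U : ι → Set E}
    (hU : Pairwise (Disjoint on U)) (hmeet : ∀ i, ∃ e ∈ U i, f e = x)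
    (hcard : Nonempty (ι ≃ f ⁻¹' {x})) :
    ∃ s : ι ≃ f ⁻¹' {x}, ∀ i e, ↑e ∈ U i ↔ s i = e := by
  choose s hsU hsx using hmeet
  have eq_of_mem {i j : ι} (h : s i ∈ U j) : i = j :=
    hU.eq (not_disjoint_iff.mpr ⟨s i, hsU i, h⟩)
  have hinj : Injective fun i ↦ (⟨s i, hsx i⟩ : f ⁻¹' {x}) := fun i j hij ↦
    eq_of_mem (by rw [show s i = s j from Subtype.ext_iff.mp hij]; exact hsU j)
  obtain ⟨σ⟩ := hcard
  have : Finite (f ⁻¹' {x}) := .of_equiv ι σ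
  have hbij := hinj.bijective_of_nat_card_le (Nat.card_congr σ).ge
  refine ⟨.ofBijective _ hbij, fun i e ↦ ⟨fun he ↦ ?_, ?_⟩⟩
  · obtain ⟨j, rfl⟩ := hbij.surjective e
    rw [eq_of_mem he]
    rfl
  · rintro rfl
    exact hsU i

lemma exists_isOpen_pairwise_disjoint_of_isSeparatedMap [TopologicalSpace E] [Finite ι]
    {f : E → X} (hsep : IsSeparatedMap f) {e : ι → E} (he : Injective e)
    (hfiber : ∀ i j, f (e i) = f (e j)) :
    ∃ U : ι → Set E, (∀ i, e i ∈ U i ∧ IsOpen (U i)) ∧ Pairwise (Disjoint on U) :=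
  Pairwise.exists_mem_filter_basis_of_disjoint
    (fun i j hij ↦ isSeparatedMap_iff_disjoint_nhds.mp hsep _ _ (hfiber i j) (he.ne hij))
    fun i ↦ nhds_basis_opens (e i)

variable [TopologicalSpace E] [TopologicalSpace X] {f : E → X}

lemma isOpen_iff_isOpen_preimage_inter (hf : Continuous f) (hopen : IsOpenMap f) {U : Set E}
    (hU : IsOpen U) {W : Set X} (hW : W ⊆ f '' U) : IsOpen W ↔ IsOpen (f ⁻¹' W ∩ U) := by
  refine ⟨fun h ↦ (h.preimage hf).inter hU, fun h ↦ ?_⟩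
  have himage : f '' (f ⁻¹' W ∩ U) = W := by
    rw [image_preimage_inter, inter_eq_left.mpr hW]
  exact himage ▸ hopen _ h

lemma isEvenlyCovered_of_pairwise_disjoint [Finite ι] [Nonempty ι] [TopologicalSpace ι]
    [DiscreteTopology ι] (hf : Continuous f) (hopen : IsOpenMap f) {U : ι → Set E}
    (hU : ∀ i, IsOpen (U i)) (hdisj : Pairwise (Disjoint on U)) {x : X} (hx : ∀ i, x ∈ f '' U i)
    (hcard : ∀ y, Nonempty (ι ≃ f ⁻¹' {y})) : IsEvenlyCovered f x ι := by
  have : Nonempty (X → E) := ⟨fun y ↦ (hcard y).some (Classical.arbitrary ι)⟩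
  let V : Set X := ⋂ i, f '' U i
  have hV : IsOpen V := isOpen_iInter_of_finite fun i ↦ hopen _ (hU i)
  have hsheet (y : X) (hy : y ∈ V) : ∃ s : ι ≃ f ⁻¹' {y}, ∀ i e, ↑e ∈ U i ↔ s i = e :=
    exists_equiv_fiber_of_pairwise_disjoint hdisj (mem_iInter.mp hy) (hcard y)
  have himage (i : ι) : V ⊆ f '' (f ⁻¹' V ∩ U i) := by
    rw [image_preimage_inter]
    exact subset_inter subset_rfl (iInter_subset _ i)
  have hinj (i : ι) : (f ⁻¹' V ∩ U i).InjOn f := by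
    rintro a ⟨haV, ha⟩ b ⟨-, hb⟩ hab
    obtain ⟨s, hs⟩ := hsheet (f a) haV
    exact congrArg Subtype.val
      (((hs i ⟨a, rfl⟩).mp ha).symm.trans ((hs i ⟨b, hab.symm⟩).mp hb))
  have hcover : f ⁻¹' V ⊆ ⋃ i, f ⁻¹' V ∩ U i := fun a ha ↦ by
    obtain ⟨s, hs⟩ := hsheet (f a) ha
    exact mem_iUnion.mpr ⟨s.symm ⟨a, rfl⟩, ha, (hs _ ⟨a, rfl⟩).mpr (s.apply_symm_apply _)⟩
  exact .of_trivialization (t := hV.trivializationDiscrete (fun i ↦ f ⁻¹' V ∩ U i) V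
    (fun i _ hW ↦ isOpen_iff_isOpen_preimage_inter hf hopen ((hV.preimage hf).inter (hU i))
      (hW.trans (himage i)))
    hinj himage (hdisj.mono fun _ _ h ↦ h.mono inter_subset_right inter_subset_right) hcover)
    (mem_iInter.mpr hx)

theorem isCoveringMap_of_isOpenMap_of_equiv_fiber [Finite ι] (hf : Continuous f)
    (hopen : IsOpenMap f) (hsep : IsSeparatedMap f) (hcard : ∀ x, Nonempty (ι ≃ f ⁻¹' {x})) :
    IsCoveringMap f := fun x ↦ by
  obtain ⟨e⟩ := hcard x
  cases isEmpty_or_nonempty ι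
  · have : IsEmpty E := ⟨fun a ↦ isEmptyElim ((hcard (f a)).some.symm ⟨a, rfl⟩)⟩
    exact IsCoveringMap.of_isEmpty f x
  obtain ⟨U, hU, hdisj⟩ := exists_isOpen_pairwise_disjoint_of_isSeparatedMap hsep
    (Subtype.val_injective.comp e.injective) fun i j ↦ (e i).2.trans (e j).2.symm
  let _ : TopologicalSpace ι := ⊥
  have : DiscreteTopology ι := ⟨rfl⟩
  exact (isEvenlyCovered_of_pairwise_disjoint hf hopen (fun i ↦ (hU i).2) hdisj
    (fun i ↦ ⟨e i, (hU i).1, (e i).2⟩) hcard).to_isEvenlyCovered_preimage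

theorem exists_sections_of_isCoveringMap [SimplyConnectedSpace X] [LocallyPathConnectedSpace X]
    (hf : IsCoveringMap f) (x₀ : X) :
    ∃ σ : f ⁻¹' {x₀} → C(X, E), (∀ i x, f (σ i x) = x) ∧ ∀ e, ∃! i, σ i (f e) = e := by
  choose σ hσ using fun i : f ⁻¹' {x₀} ↦
    (hf.existsUnique_continuousMap_lifts (.id X) x₀ i.1 i.2).exists
  refine ⟨σ, fun i ↦ congrFun (hσ i).2, fun e ↦ ?_⟩
  obtain ⟨s, hse, hs⟩ := (hf.existsUnique_continuousMap_lifts (.id X) (f e) e rfl).exists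
  have eq_of_eq_at (i : f ⁻¹' {x₀}) (x : X) (h : σ i x = s x) : ⇑(σ i) = s :=
    hf.eq_of_comp_eq (σ i).continuous s.continuous ((hσ i).2.trans hs.symm) x h
  refine ⟨⟨s x₀, congrFun hs x₀⟩, ?_, fun i hi ↦ Subtype.ext ?_⟩
  · exact (congrFun (eq_of_eq_at _ x₀ (hσ _).1) _).trans hse
  · rw [← (hσ i).1, eq_of_eq_at i (f e) (hi.trans hse.symm)]

end Covering

section Polynomials

variable {T R : Type*} [TopologicalSpace T] [TopologicalSpace R] {n : ℕ}

lemma continuous_polynomial_eval [Semiring R] [IsTopologicalSemiring R] {p : T → R[X]} {a : T → R}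
    (hdeg : ∀ t, (p t).natDegree ≤ n) (hp : ∀ k, Continuous fun t ↦ (p t).coeff k)
    (ha : Continuous a) : Continuous fun t ↦ (p t).eval (a t) := by
  simp only [fun t ↦ eval_eq_sum_range' (Nat.lt_succ_of_le (hdeg t)) (a t)]
  fun_prop

lemma continuous_taylor_coeff [CommSemiring R] [IsTopologicalSemiring R] {p : T → R[X]}
    {a : T → R} (hdeg : ∀ t, (p t).natDegree ≤ n) (hp : ∀ k, Continuous fun t ↦ (p t).coeff k)
    (ha : Continuous a) (k : ℕ) : Continuous fun t ↦ (taylor (a t) (p t)).coeff k := by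
  simp only [taylor_coeff]
  refine continuous_polynomial_eval (n := n)
    (fun t ↦ (natDegree_hasseDeriv_le _ _).trans ((Nat.sub_le _ _).trans (hdeg t)))
    (fun j ↦ ?_) ha
  simp only [hasseDeriv_coeff]
  fun_prop

lemma eventually_rootMultiplicity_le [CommRing R] [IsTopologicalRing R] [T1Space R]
    {p : T → R[X]} {a : T → R} (hdeg : ∀ t, (p t).natDegree ≤ n)
    (hp : ∀ k, Continuous fun t ↦ (p t).coeff k) (ha : Continuous a) {t₀ : T} (h₀ : p t₀ ≠ 0) :
    ∀ᶠ t in 𝓝 t₀, (p t).rootMultiplicity (a t) ≤ (p t₀).rootMultiplicity (a t₀) := by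
  simp only [rootMultiplicity_eq_natTrailingDegree, ← taylor_apply]
  have hlead : (taylor (a t₀) (p t₀)).coeff (taylor (a t₀) (p t₀)).natTrailingDegree ≠ 0 :=
    trailingCoeff_nonzero_iff_nonzero.mpr ((taylor_injective _).ne_iff' (map_zero _) |>.mpr h₀)
  filter_upwards [(continuous_taylor_coeff hdeg hp ha _).continuousAt.eventually_ne hlead]
    with t ht using natTrailingDegree_le_of_ne_zero ht

end Polynomials

section RootMultiplicity

variable {K ι : Type*} [CommRing K] [IsDomain K] [DecidableEq K]

lemma sum_rootMultiplicity_eq_natDegree [Fintype ι] {q : K[X]} (hq : q.Splits) {α : ι → K}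
    (hinj : Injective α) (hrange : (q.roots.toFinset : Set K) = range α) :
    ∑ i, q.rootMultiplicity (α i) = q.natDegree := by
  have himage : q.roots.toFinset = Finset.univ.image α := by
    rw [← Finset.coe_inj, hrange, Finset.coe_image, Finset.coe_univ, image_univ]
  calc ∑ i, q.rootMultiplicity (α i)
      = ∑ z ∈ q.roots.toFinset, q.roots.count z := by
        rw [himage, Finset.sum_image hinj.injOn]
        simp only [count_roots]
    _ = q.roots.card := Multiset.toFinset_sum_count_eq _
    _ = q.natDegree := hq.natDegree_eq_card_roots.symm

lemma isLocallyConstant_rootMultiplicity [Finite ι] {T : Type*} [TopologicalSpace T]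
    [TopologicalSpace K] [IsTopologicalRing K] [T1Space K] {n : ℕ} {p : T → K[X]}
    (h₀ : ∀ t, p t ≠ 0) (hdeg : ∀ t, (p t).natDegree = n)
    (hp : ∀ k, Continuous fun t ↦ (p t).coeff k) (hsplits : ∀ t, (p t).Splits)
    {α : ι → T → K} (hα : ∀ i, Continuous (α i)) (hinj : ∀ t, Injective fun i ↦ α i t)
    (hrange : ∀ t, ((p t).roots.toFinset : Set K) = range fun i ↦ α i t) (i : ι) :
    IsLocallyConstant fun t ↦ (p t).rootMultiplicity (α i t) := by
  have := Fintype.ofFinite ι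
  refine (IsLocallyConstant.iff_eventually_eq _).mpr fun t₀ ↦ ?_
  have hle : ∀ᶠ t in 𝓝 t₀, ∀ j,
      (p t).rootMultiplicity (α j t) ≤ (p t₀).rootMultiplicity (α j t₀) :=
    Filter.eventually_all.mpr fun j ↦
      eventually_rootMultiplicity_le (fun t ↦ (hdeg t).le) hp (hα j) (h₀ t₀)
  have hsum (t : T) : ∑ j, (p t).rootMultiplicity (α j t) = n :=
    (sum_rootMultiplicity_eq_natDegree (hsplits t) (hinj t) (hrange t)).trans (hdeg t)
  filter_upwards [hle] with t ht
  exact (Finset.sum_eq_sum_iff_of_le fun j _ ↦ ht j).mp ((hsum t).trans (hsum t₀).symm) i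
    (Finset.mem_univ i)

end RootMultiplicity

section RootContinuity

variable {T K : Type*} [TopologicalSpace T]

lemma eventually_forall_norm_coeff_sub_lt [SeminormedRing K] {p : T → K[X]} {n : ℕ}
    (hdeg : ∀ t, (p t).natDegree ≤ n) (hp : ∀ k, Continuous fun t ↦ (p t).coeff k)
    (t₀ : T) {δ : ℝ} (hδ : 0 < δ) :
    ∀ᶠ t in 𝓝 t₀, ∀ k, ‖(p t).coeff k - (p t₀).coeff k‖ < δ := by
  have hlow : ∀ᶠ t in 𝓝 t₀, ∀ k ∈ Finset.range (n + 1), ‖(p t).coeff k - (p t₀).coeff k‖ < δ :=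
    (Finset.eventually_all _).mpr fun k _ ↦ by
      simpa [dist_eq_norm] using (hp k).continuousAt.eventually (Metric.ball_mem_nhds _ hδ)
  filter_upwards [hlow] with t ht k
  obtain hk | hk := lt_or_ge k (n + 1)
  · exact ht k (Finset.mem_range.mpr hk)
  · simpa [coeff_eq_zero_of_natDegree_lt, (hdeg _).trans_lt hk] using hδ

lemma eventually_exists_root_norm_sub_lt [NormedField K] {p : T → K[X]} {n : ℕ}
    (hmonic : ∀ t, (p t).Monic) (hdeg : ∀ t, (p t).natDegree = n)
    (hp : ∀ k, Continuous fun t ↦ (p t).coeff k) (hsplits : ∀ t, (p t).Splits)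
    {t₀ : T} {z : K} (hz : (p t₀).IsRoot z) {ε : ℝ} (hε : 0 < ε) :
    ∀ᶠ t in 𝓝 t₀, ∃ w, (p t).IsRoot w ∧ ‖z - w‖ < ε := by
  have hn : n ≠ 0 := fun h ↦ by
    have hone := (hmonic t₀).natDegree_eq_zero.mp ((hdeg t₀).trans h)
    simp [hone] at hz
  have hbound : Filter.Tendsto (fun δ : ℝ ↦ ((n + 1) * δ) ^ (n : ℝ)⁻¹ * max ‖z‖ 1) (𝓝 0) (𝓝 0) := by
    have hcont : Continuous fun δ : ℝ ↦ ((n + 1) * δ) ^ (n : ℝ)⁻¹ * max ‖z‖ 1 :=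
      ((continuous_const_mul _).rpow_const fun _ ↦ .inr (by positivity)).mul_const _
    simpa [Real.zero_rpow, hn] using hcont.tendsto 0
  obtain ⟨δ, hδε, hδ⟩ : ∃ δ : ℝ, ((n + 1) * δ) ^ (n : ℝ)⁻¹ * max ‖z‖ 1 < ε ∧ 0 < δ :=
    (((hbound.mono_left nhdsWithin_le_nhds).eventually_lt_const hε).and
      (self_mem_nhdsWithin (s := Ioi 0))).exists
  filter_upwards [eventually_forall_norm_coeff_sub_lt (fun t ↦ (hdeg t).le) hp t₀ hδ] with t ht
  obtain ⟨w, hw, hzw⟩ := exists_roots_norm_sub_lt_of_norm_coeff_sub_lt hδ hz (hmonic t₀)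
    (hmonic t) ((hdeg t).trans (hdeg t₀).symm) ht (hsplits t)
  rw [hdeg t₀] at hzw
  exact ⟨w, isRoot_of_mem_roots hw, hzw.trans hδε⟩

end RootContinuity

section RootSpace

variable {T K : Type*}

/-- The incidence set of a family of polynomials `p t`: pairs of a parameter and a root. As a
subspace of `T × K` it is the total space of the covering whose sections are the continuous
root functions. -/
def rootSpace [Semiring K] (p : T → K[X]) : Set (T × K) :=
  {q | (p q.1).IsRoot q.2}

/-- The projection of the incidence set to the parameter space; its fibre over `t` is the set of
roots of `p t`. -/
def rootProj [Semiring K] (p : T → K[X]) (e : rootSpace p) : T :=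
  e.1.1

lemma nonempty_equiv_rootProj_fiber [CommRing K] [IsDomain K] [DecidableEq K] {p : T → K[X]} {t : T}
    (h₀ : p t ≠ 0) {r : ℕ} (hcard : (p t).roots.toFinset.card = r) :
    Nonempty (Fin r ≃ rootProj p ⁻¹' {t}) := by
  have hroot (z : K) : z ∈ (p t).roots.toFinset ↔ (p t).IsRoot z :=
    Multiset.mem_toFinset.trans (mem_roots h₀)
  refine ⟨((p t).roots.toFinset.equivFinOfCardEq hcard).symm.trans
    { toFun z := ⟨⟨(t, z), (hroot z).mp z.2⟩, rfl⟩
      invFun e := ⟨e.1.1.2, (hroot _).mpr ?_⟩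
      left_inv _ := rfl
      right_inv := ?_ }⟩
  · obtain ⟨⟨⟨_, _⟩, hz⟩, rfl⟩ := e
    exact hz
  · rintro ⟨⟨⟨_, _⟩, _⟩, rfl⟩
    rfl

variable [TopologicalSpace T]

lemma continuous_rootProj [Semiring K] [TopologicalSpace K] (p : T → K[X]) :
    Continuous (rootProj p) :=
  continuous_fst.comp continuous_subtype_val

lemma isSeparatedMap_rootProj [Semiring K] [TopologicalSpace K] [T2Space K] (p : T → K[X]) :
    IsSeparatedMap (rootProj p) := fun _ _ hab hne ↦
  separated_by_continuous (continuous_snd.comp continuous_subtype_val) fun h ↦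
    hne (Subtype.ext (Prod.ext hab h))

variable [NormedField K] {n : ℕ} {p : T → K[X]}

lemma isOpenMap_rootProj (hmonic : ∀ t, (p t).Monic) (hdeg : ∀ t, (p t).natDegree = n)
    (hp : ∀ k, Continuous fun t ↦ (p t).coeff k) (hsplits : ∀ t, (p t).Splits) :
    IsOpenMap (rootProj p) := by
  refine isOpenMap_iff_nhds_le.mpr ?_
  rintro ⟨⟨t₀, z⟩, hz⟩ S hS
  obtain ⟨N, hN, hNS⟩ := (mem_nhds_subtype _ _ _).mp (Filter.mem_map.mp hS)
  obtain ⟨A, hA, B, hB, hAB⟩ := mem_nhds_prod_iff.mp hN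
  obtain ⟨ε, hε, hεB⟩ := Metric.mem_nhds_iff.mp hB
  filter_upwards [hA, eventually_exists_root_norm_sub_lt hmonic hdeg hp hsplits hz hε]
    with t htA ⟨w, hw, hzw⟩
  have hwB : w ∈ B := hεB (by rwa [Metric.mem_ball', dist_eq_norm])
  exact @hNS ⟨(t, w), hw⟩ (hAB ⟨htA, hwB⟩)

variable [DecidableEq K] {r : ℕ}

theorem isCoveringMap_rootProj (hmonic : ∀ t, (p t).Monic) (hdeg : ∀ t, (p t).natDegree = n)
    (hp : ∀ k, Continuous fun t ↦ (p t).coeff k) (hsplits : ∀ t, (p t).Splits)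
    (hroots : ∀ t, (p t).roots.toFinset.card = r) : IsCoveringMap (rootProj p) :=
  isCoveringMap_of_isOpenMap_of_equiv_fiber (continuous_rootProj p)
    (isOpenMap_rootProj hmonic hdeg hp hsplits) (isSeparatedMap_rootProj p)
    fun t ↦ nonempty_equiv_rootProj_fiber (hmonic t).ne_zero (hroots t)

theorem exists_continuous_roots [SimplyConnectedSpace T] [LocallyPathConnectedSpace T]
    (hmonic : ∀ t, (p t).Monic) (hdeg : ∀ t, (p t).natDegree = n)
    (hp : ∀ k, Continuous fun t ↦ (p t).coeff k) (hsplits : ∀ t, (p t).Splits)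
    (hroots : ∀ t, (p t).roots.toFinset.card = r) :
    ∃ α : Fin r → T → K, (∀ i, Continuous (α i)) ∧ (∀ t, Injective fun i ↦ α i t) ∧
      ∀ t, ((p t).roots.toFinset : Set K) = range fun i ↦ α i t := by
  let t₀ : T := Classical.arbitrary T
  obtain ⟨σ, hσ, hunique⟩ :=
    exists_sections_of_isCoveringMap (isCoveringMap_rootProj hmonic hdeg hp hsplits hroots) t₀
  obtain ⟨e⟩ := nonempty_equiv_rootProj_fiber (hmonic t₀).ne_zero (hroots t₀)
  refine ⟨fun i t ↦ (σ (e i) t).1.2, fun i ↦ by fun_prop, fun t i j hij ↦ ?_, fun t ↦ ?_⟩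
  · have hσij : σ (e i) t = σ (e j) t :=
      Subtype.ext (Prod.ext ((hσ _ _).trans (hσ _ _).symm) hij)
    exact e.injective ((hunique (σ (e i) t)).unique (by rw [hσ]) (by rw [hσ, hσij]))
  · ext z
    rw [Finset.mem_coe, Multiset.mem_toFinset, mem_roots (hmonic t).ne_zero]
    constructor
    · intro hz
      obtain ⟨i, hi⟩ := (hunique ⟨(t, z), hz⟩).exists
      refine ⟨e.symm i, ?_⟩
      simp only [Equiv.apply_symm_apply]
      exact congrArg (fun q : rootSpace p ↦ q.1.2) hi
    · rintro ⟨i, rfl⟩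
      have hroot : (p (rootProj p (σ (e i) t))).IsRoot (σ (e i) t).1.2 := (σ (e i) t).2
      rwa [hσ] at hroot

end RootSpace

lemma degree_sum_C_mul_X_pow_lt {R : Type*} [Semiring R] {n : ℕ} (a : Fin n → R) :
    (∑ i : Fin n, C (a i) * X ^ (n - ((i : ℕ) + 1))).degree < (n : WithBot ℕ) := by
  refine mem_degreeLT.mp (Submodule.sum_mem _ fun i _ ↦ mem_degreeLT.mpr ?_)
  exact (degree_C_mul_X_pow_le _ _).trans_lt (Nat.cast_lt.mpr (by lia))

lemma natDegree_X_pow_add {R : Type*} [Semiring R] [Nontrivial R] {n : ℕ} {q : R[X]}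
    (hq : q.degree < n) : (X ^ n + q).natDegree = n := by
  rw [natDegree_eq_of_degree_eq (degree_add_eq_left_of_degree_lt (by rwa [degree_X_pow])),
    natDegree_X_pow]

theorem roots_constant_multiplicities_general {T K : Type*} [TopologicalSpace T]
    [SimplyConnectedSpace T] [LocallyPathConnectedSpace T] [NormedField K] [DecidableEq K]
    {n r : ℕ} (c : Fin n → T → K) (hc : ∀ i, Continuous (c i)) (p : T → K[X])
    (hp : ∀ t, p t = X ^ n + ∑ i : Fin n, C (c i t) * X ^ (n - ((i : ℕ) + 1)))
    (hsplits : ∀ t, (p t).Splits) (hroots : ∀ t, (p t).roots.toFinset.card = r) :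
    ∃ α : Fin r → T → K, (∀ i, Continuous (α i)) ∧ (∀ t, Injective fun i ↦ α i t) ∧
      (∀ t, ((p t).roots.toFinset : Set K) = range fun i ↦ α i t) ∧
      ∀ i t t', (p t).rootMultiplicity (α i t) = (p t').rootMultiplicity (α i t') := by
  have hmonic (t : T) : (p t).Monic := hp t ▸ monic_X_pow_add (degree_sum_C_mul_X_pow_lt _)
  have hdeg (t : T) : (p t).natDegree = n := by
    rw [hp, natDegree_X_pow_add (degree_sum_C_mul_X_pow_lt _)]
  have hcoeff (k : ℕ) : Continuous fun t ↦ (p t).coeff k := by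
    simp only [hp, coeff_add, finsetSum_coeff, coeff_C_mul]
    fun_prop
  obtain ⟨α, hα, hinj, hrange⟩ := exists_continuous_roots hmonic hdeg hcoeff hsplits hroots
  have hmult (i : Fin r) : IsLocallyConstant fun t ↦ (p t).rootMultiplicity (α i t) :=
    isLocallyConstant_rootMultiplicity (fun t ↦ (hmonic t).ne_zero) hdeg hcoeff hsplits hα hinj
      hrange i
  exact ⟨α, hα, hinj, hrange, fun i ↦ (hmult i).apply_eq_of_preconnectedSpace⟩

/-- If a monic polynomial `p_t(λ) = λⁿ + c₁(t)λ^{n-1} + ⋯ + cₙ(t)` with continuous coefficients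
has exactly `r` distinct roots for every `t` in a real interval `I`, then its distinct roots can
be parameterized by `r` continuous functions whose multiplicities are constant in `t`. -/
theorem roots_constant_multiplicities {n r : ℕ} (hn : 1 ≤ n) (hr : r ≤ n)
    (I : Set ℝ) (hI : I.OrdConnected) (hne : I.Nonempty)
    (c : Fin n → I → ℂ) (hc : ∀ i, Continuous (c i))
    (p : I → Polynomial ℂ)
    (hp : ∀ t, p t = X ^ n + ∑ i : Fin n, C (c i t) * X ^ (n - ((i : ℕ) + 1)))
    (hroots : ∀ t, (p t).roots.toFinset.card = r) :
    ∃ α : Fin r → I → ℂ, (∀ i, Continuous (α i)) ∧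
      (∀ t : I, Function.Injective (fun i => α i t)) ∧
      (∀ t : I, ((p t).roots.toFinset : Set ℂ) = Set.range (fun i => α i t)) ∧
      (∀ i, ∀ t t' : I, (p t).rootMultiplicity (α i t) = (p t').rootMultiplicity (α i t')) := by
  have : ContractibleSpace I := hI.convex.contractibleSpace hne
  have : LocallyPathConnectedSpace I := hI.convex.locallyPathConnectedSpace
  exact roots_constant_multiplicities_general c hc p hp (fun t ↦ IsAlgClosed.splits (p t)) hroots
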